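/- Fix integers n ≥ 2 and k ≥ 3, a constant b_k < 0, and δ ∈ (0, 1/2); set c_k := 2(n−1)k²(−b_k)^{2/k}, γ_k := 1/2 − 1/k, μ_k := k/2 − 1. Let ζ : (0,1) → ℝ be a solution of −(1/2)(u^{−1} − u) ζ′(u) − (4γ_k + u^{−2}) ζ(u) = u^{−6}(1 − u²)^{4γ_k} (so that ζ(u) = u^{−4} + O(u^{−2} log(1/u)) as u ↘ 0 and ζ(u) = −(1 − u²)^{4γ_k} + O((1 − u²)^{4γ_k+1}|log(1 − u²)|) as u ↗ 1). Then there exist constants A₃ > 0, B₃ ≥ B₂ > 0 and a time τ₃, all depending only on n, k, b_k, δ, such that the functions z_±(u,τ) := (1 ± δ) c_k e^{−2γ_k τ} u^{−2}(1 − u²)^{1+2γ_k} ± A₃ e^{−4γ_k τ} ζ(u) form a pair of properly ordered barriers, i.e. D_u[z₊] ≥ 0, D_u[z₋] ≤ 0, and z₋(u,τ) < z₊(u,τ), at every point of the region B₂ √(2A₃/c_k) e^{−γ_k τ} ≤ u ≤ 1 − B₃ (2A₃/c_k)^{k/2} e^{−μ_k τ}, τ ≥ τ₃. -/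

import Mathlib

open Topology Filter Asymptotics Set

/-- `γ_k = 1/2 - 1/k`. -/
noncomputable def gam (k : ℕ) : ℝ := 1/2 - 1/(k:ℝ)

/-- `μ_k = k/2 - 1`. -/
noncomputable def mu (k : ℕ) : ℝ := (k:ℝ)/2 - 1

/-- `c_k = 2(n-1)k²(-b_k)^{2/k}`. -/
noncomputable def ck (n k : ℕ) (bk : ℝ) : ℝ :=
  2 * ((n:ℝ) - 1) * (k:ℝ)^2 * (-bk) ^ ((2:ℝ)/(k:ℝ))

/-- The quadratic operator `Q_u[Z] = Z Z'' - (1/2)(Z')² - Z Z'/u - 2(n-1)Z²/u²`. -/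
noncomputable def Qop (n : ℕ) (Z : ℝ → ℝ) (u : ℝ) : ℝ :=
  Z u * deriv (deriv Z) u - (1/2) * (deriv Z u)^2
    - Z u * deriv Z u / u - 2 * ((n:ℝ) - 1) * (Z u)^2 / u^2

/-- The parabolic operator
`D_u[z] = z_τ - (1/2)(u⁻¹ - u) z_u - u⁻² z - Q_u[z]/(2(n-1))`. -/
noncomputable def Dop (n : ℕ) (z : ℝ → ℝ → ℝ) (u τ : ℝ) : ℝ :=
  deriv (z u) τ - (1/2) * (u⁻¹ - u) * deriv (fun x => z x τ) u
    - z u τ / u^2 - Qop n (fun x => z x τ) u / (2 * ((n:ℝ) - 1))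

/-- The intermediate-region barrier with sign `s` (`s = 1` upper, `s = -1` lower):
`z_± = (1 ± δ) c_k e^{-2γ_k τ} u⁻²(1-u²)^{1+2γ_k} ± A₃ e^{-4γ_k τ} ζ(u)`. -/
noncomputable def zIntPM (n k : ℕ) (bk δ A₃ : ℝ) (ζ : ℝ → ℝ) (s u τ : ℝ) : ℝ :=
  (1 + s*δ) * ck n k bk * Real.exp (-2 * gam k * τ) * u ^ (-2:ℝ) * (1 - u^2) ^ (1 + 2 * gam k)
    + s * A₃ * Real.exp (-4 * gam k * τ) * ζ u

lemma hda {f f1 : ℝ → ℝ} {d d1 u : ℝ} (h : HasDerivAt f d u) (hf : ∀ v, f1 v = f v)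
    (hd : d1 = d) : HasDerivAt f1 d1 u := by
  have : f1 = f := funext hf
  rw [this, hd]; exact h

lemma gam_facts (k : ℕ) (hk : 3 ≤ k) :
    0 < gam k ∧ gam k < 1/2 ∧ (2:ℝ)/k + 2 * gam k = 1 ∧ mu k * (2/(k:ℝ)) = 2 * gam k := by
  have h3 : (3:ℝ) ≤ k := by exact_mod_cast hk
  have hk0 : (0:ℝ) < k := by linarith
  have h1 : 1/(k:ℝ) ≤ 1/3 := one_div_le_one_div_of_le (by norm_num) h3
  have h2 : 0 < 1/(k:ℝ) := by positivity
  unfold gam mu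
  refine ⟨by linarith, by linarith, by field_simp; ring, by field_simp⟩

lemma hasDerivAt_xpow (p u : ℝ) (hu : u ∈ Ioo (0:ℝ) 1) :
    HasDerivAt (fun v : ℝ => (1 - v^2) ^ p) (-2*u*p*(1-u^2)^p/(1-u^2)) u := by
  have hx : 0 < 1 - u^2 := by nlinarith [hu.1, hu.2]
  have h := (((hasDerivAt_pow 2 u).const_sub 1)).rpow_const (p := p) (Or.inl hx.ne')
  convert h using 1
  rw [Real.rpow_sub_one hx.ne']
  push_cast
  ring

lemma zeta_bound (k : ℕ) (hk : 3 ≤ k) (ζ ζ' : ℝ → ℝ)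
    (hderiv : ∀ u ∈ Set.Ioo (0:ℝ) 1, HasDerivAt ζ (ζ' u) u)
    (hz0 : (fun u => ζ u - u ^ (-4:ℝ)) =O[𝓝[>] (0:ℝ)]
        fun u => u ^ (-2:ℝ) * Real.log (1/u))
    (hz1 : (fun u => ζ u + (1 - u^2) ^ (4 * gam k)) =O[𝓝[<] (1:ℝ)]
        fun u => (1 - u^2) ^ (4 * gam k + 1) * |Real.log (1 - u^2)|) :
    ∃ C : ℝ, 0 < C ∧ ∀ u ∈ Ioo (0:ℝ) 1, |ζ u| ≤ C * (1 - u^2) ^ (4 * gam k) / u^4 := by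
  obtain ⟨hg0, hg1, -, -⟩ := gam_facts k hk
  obtain ⟨C0, hC0, h0⟩ := hz0.exists_pos
  obtain ⟨C1, hC1, h1⟩ := hz1.exists_pos
  have h0 := h0.bound
  have h1 := h1.bound
  -- near zero
  have e0 : ∃ a ∈ Ioo (0:ℝ) (1/2), ∀ u ∈ Ioo 0 a, |ζ u| ≤ (C0 + 1) / u^4 := by
    obtain ⟨a, ha, hs⟩ := (mem_nhdsGT_iff_exists_Ioo_subset).1 h0
    have ha : (0:ℝ) < a := ha
    refine ⟨min a (1/4), ⟨lt_min ha (by norm_num), lt_of_le_of_lt (min_le_right _ _) (by norm_num)⟩, ?_⟩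
    intro u hu
    have hu0 := hu.1
    have hu1 : u < a := lt_of_lt_of_le hu.2 (min_le_left _ _)
    have hu2 : u < 1/4 := lt_of_lt_of_le hu.2 (min_le_right _ _)
    have h := hs ⟨hu0, hu1⟩
    simp only [mem_ofPred_eq, Real.norm_eq_abs] at h
    have q4 : u ^ (-4:ℝ) = 1 / u^4 := by
      rw [Real.rpow_neg hu0.le, one_div]; norm_cast
    have q2 : u ^ (-2:ℝ) = 1 / u^2 := by
      rw [Real.rpow_neg hu0.le, one_div]; norm_cast
    rw [q4, q2] at h
    have hl0 : 0 ≤ Real.log (1/u) := Real.log_nonneg (by rw [le_div_iff₀ hu0]; linarith)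
    have hl1 : Real.log (1/u) ≤ 1/u := by
      have := Real.log_le_sub_one_of_pos (show 0 < 1/u by positivity)
      linarith
    have hl2 : 1/u ≤ 1/u^2 := one_div_le_one_div_of_le (by positivity) (by nlinarith)
    have hb : |1/u^2 * Real.log (1/u)| ≤ 1/u^4 := by
      rw [abs_of_nonneg (by positivity)]
      calc 1/u^2 * Real.log (1/u) ≤ 1/u^2 * (1/u^2) := by gcongr; linarith
        _ = 1/u^4 := by field_simp
    have hp : 0 < 1/u^4 := by positivity
    have : |ζ u| ≤ |ζ u - 1/u^4| + 1/u^4 := by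
      have := abs_add_le (ζ u - 1/u^4) (1/u^4)
      rw [abs_of_pos hp] at this
      simpa using this
    calc |ζ u| ≤ C0 * (1/u^4) + 1/u^4 := by nlinarith
      _ = _ := by ring
  have e1 : ∃ b ∈ Ioo (1/2:ℝ) 1, ∀ u ∈ Ioo b 1, |ζ u| ≤ (C1 + 1) * (1 - u^2) ^ (4 * gam k) := by
    obtain ⟨b, hb, hs⟩ := (mem_nhdsLT_iff_exists_Ioo_subset).1 h1
    have hb : b < (1:ℝ) := hb
    refine ⟨max b (3/4), ⟨lt_of_lt_of_le (by norm_num) (le_max_right _ _), max_lt hb (by norm_num)⟩, ?_⟩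
    intro u hu
    have hu1 := hu.2
    have hub : b < u := lt_of_le_of_lt (le_max_left _ _) hu.1
    have hu2 : 3/4 < u := lt_of_le_of_lt (le_max_right _ _) hu.1
    have h := hs ⟨hub, hu1⟩
    simp only [mem_ofPred_eq, Real.norm_eq_abs] at h
    have hx : 0 < 1 - u^2 := by nlinarith
    have hx1 : 1 - u^2 ≤ 1 := by nlinarith
    rw [Real.rpow_add_one hx.ne'] at h
    set x := 1 - u^2
    set P := x ^ (4 * gam k)
    have hP : 0 < P := Real.rpow_pos_of_pos hx _
    have hl : x * |Real.log x| ≤ 1 := by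
      have := Real.abs_log_mul_self_lt x hx hx1
      rw [abs_mul, abs_of_pos hx] at this
      linarith
    have hb : |P * x * (|Real.log x|)| ≤ P := by
      rw [abs_of_nonneg (by positivity), mul_assoc]
      nlinarith
    have : |ζ u| ≤ |ζ u + P| + P := by
      have := abs_sub (ζ u + P) P
      rw [abs_of_pos hP] at this
      simpa using this
    nlinarith
  obtain ⟨a, ha, e0⟩ := e0
  obtain ⟨b, hb, e1⟩ := e1
  have hcont : ContinuousOn (fun u => |ζ u| / ((1 - u^2) ^ (4 * gam k))) (Icc a b) := by
    intro u hu
    have hu' : u ∈ Ioo (0:ℝ) 1 := ⟨lt_of_lt_of_le ha.1 hu.1, lt_of_le_of_lt hu.2 hb.2⟩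
    have hx : 0 < 1 - u^2 := by nlinarith [hu'.1, hu'.2]
    exact ((hderiv u hu').continuousAt.abs.div (hasDerivAt_xpow _ u hu').continuousAt
      (Real.rpow_pos_of_pos hx _).ne').continuousWithinAt
  obtain ⟨M, hM⟩ := (isCompact_Icc.image_of_continuousOn hcont).bddAbove
  have hq : 0 < (3/4:ℝ) ^ (4 * gam k) := by positivity
  refine ⟨(C0 + 1) / (3/4:ℝ) ^ (4 * gam k) + (C1 + 1) + |M|, by positivity, ?_⟩
  intro u hu
  have hu0 := hu.1
  have hu1 := hu.2
  have hx : 0 < 1 - u^2 := by nlinarith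
  have hP : 0 < (1 - u^2) ^ (4 * gam k) := Real.rpow_pos_of_pos hx _
  have hu4 : u^4 ≤ 1 := pow_le_one₀ hu0.le hu1.le
  have key : ∀ X : ℝ, 0 ≤ X → X ≤ X / u^4 := by
    intro X hX
    rw [le_div_iff₀ (by positivity)]
    nlinarith
  have h34 : 0 < (C0 + 1) / (3/4:ℝ) ^ (4 * gam k) := by positivity
  rcases lt_or_ge u a with h | h
  · refine (e0 u ⟨hu0, h⟩).trans ?_
    gcongr
    have hm : (3/4:ℝ) ^ (4 * gam k) ≤ (1 - u^2) ^ (4 * gam k) :=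
      Real.rpow_le_rpow (by norm_num) (by nlinarith [ha.2]) (by positivity)
    calc C0 + 1 = (C0 + 1) / (3/4:ℝ) ^ (4 * gam k) * (3/4:ℝ) ^ (4 * gam k) := by field_simp
      _ ≤ _ := by
        gcongr
        have := abs_nonneg M
        linarith
  · rcases lt_or_ge b u with h' | h'
    · refine (e1 u ⟨h', hu1⟩).trans ((key _ (by positivity)).trans ?_)
      have := abs_nonneg M
      have : C1 + 1 ≤ (C0 + 1) / (3/4:ℝ) ^ (4 * gam k) + (C1 + 1) + |M| := by linarith
      gcongr
    · have := hM (mem_image_of_mem _ (show u ∈ Icc a b from ⟨h, h'⟩))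
      rw [div_le_iff₀ hP] at this
      refine this.trans (le_trans ?_ (key _ (by positivity)))
      gcongr
      have := le_abs_self M
      linarith

lemma region_bound (k : ℕ) (hk : 3 ≤ k) (A c K u τ : ℝ) (hA : 0 < A) (hc : 0 < c) (hK : 1 ≤ K)
    (h1 : K ^ ((k:ℝ)/2) * Real.sqrt (2 * A / c) * Real.exp (-gam k * τ) ≤ u)
    (h2 : u ≤ 1 - K ^ ((k:ℝ)/2) * (2 * A / c) ^ ((k:ℝ)/2) * Real.exp (-mu k * τ)) :
    u ∈ Ioo (0:ℝ) 1 ∧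
    K * (A * Real.exp (-2 * gam k * τ) * (1 - u^2) ^ (2 * gam k)) ≤ c * (u^2 * (1 - u^2)) := by
  obtain ⟨hg0, hg1, hg2, hg3⟩ := gam_facts k hk
  have hk0 : (0:ℝ) < k := by
    have : (3:ℝ) ≤ k := by exact_mod_cast hk
    linarith
  have hK0 : 0 < K := by linarith
  set r := 2 * A / c with hr
  have hr0 : 0 < r := by positivity
  have hAr : A = c * r / 2 := by rw [hr]; field_simp
  have p1 : 0 < K ^ ((k:ℝ)/2) * Real.sqrt r * Real.exp (-gam k * τ) := by positivity
  have p2 : 0 < K ^ ((k:ℝ)/2) * r ^ ((k:ℝ)/2) * Real.exp (-mu k * τ) := by positivity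
  have hu0 : 0 < u := by linarith
  have hu1 : u < 1 := by linarith
  refine ⟨⟨hu0, hu1⟩, ?_⟩
  have hx : 0 < 1 - u^2 := by nlinarith
  have hx1 : 1 - u^2 ≤ 1 := by nlinarith
  set E := Real.exp (-2 * gam k * τ) with hE
  have hE0 : 0 < E := Real.exp_pos _
  -- first
  have b1 : K * r * E ≤ u^2 := by
    have hs := pow_le_pow_left₀ p1.le h1 2
    have e1 : (K ^ ((k:ℝ)/2) * Real.sqrt r * Real.exp (-gam k * τ))^2 = K ^ k * r * E := by
      rw [mul_pow, mul_pow, Real.sq_sqrt hr0.le, ← Real.exp_nat_mul, ← Real.rpow_mul_natCast hK0.le]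
      congr 2
      · rw [← Real.rpow_natCast]; congr 1; push_cast; ring
      · push_cast; ring
    rw [e1] at hs
    have : K ≤ K ^ k := le_self_pow₀ hK (by omega)
    refine le_trans ?_ hs
    gcongr
  have b2 : K * r * E ≤ (1 - u^2) ^ ((2:ℝ)/k) := by
    have hle : K ^ ((k:ℝ)/2) * r ^ ((k:ℝ)/2) * Real.exp (-mu k * τ) ≤ 1 - u^2 := by nlinarith
    have hs := Real.rpow_le_rpow p2.le hle (show 0 ≤ (2:ℝ)/k by positivity)
    refine le_trans (le_of_eq ?_) hs
    rw [Real.mul_rpow (by positivity) (by positivity), Real.mul_rpow (by positivity) (by positivity),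
      ← Real.rpow_mul hK0.le, ← Real.rpow_mul hr0.le, ← Real.exp_mul]
    have : (k:ℝ)/2 * (2/k) = 1 := by field_simp
    rw [this, Real.rpow_one, Real.rpow_one, hE]
    congr 2
    linear_combination τ * hg3
  have hS : 0 < (1 - u^2) ^ (2 * gam k) := Real.rpow_pos_of_pos hx _
  have hS1 : (1 - u^2) ^ (2 * gam k) ≤ 1 := Real.rpow_le_one hx.le hx1 (by positivity)
  have hSx : (1 - u^2) ^ ((2:ℝ)/k) * (1 - u^2) ^ (2 * gam k) = 1 - u^2 := by
    rw [← Real.rpow_add hx, hg2, Real.rpow_one]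
  set S := (1 - u^2) ^ (2 * gam k)
  set T := (1 - u^2) ^ ((2:ℝ)/k)
  have b3 : K * r * E * S ≤ 1 - u^2 := by rw [← hSx]; gcongr
  have b4 : K * r * E * S ≤ u^2 := by
    have : 0 < K * r * E := by positivity
    nlinarith
  have b5 : K * r * E * S ≤ 2 * (u^2 * (1 - u^2)) := by
    rcases le_total (1/2) (u^2) with h | h
    · nlinarith
    · nlinarith [sq_nonneg u]
  calc K * (A * E * S) = c / 2 * (K * r * E * S) := by rw [hAr]; ring
    _ ≤ c / 2 * (2 * (u^2 * (1 - u^2))) := by gcongr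
    _ = _ := by ring

lemma zeta_derivs (k : ℕ) (hk : 3 ≤ k) (ζ ζ' : ℝ → ℝ)
    (hderiv : ∀ u ∈ Set.Ioo (0:ℝ) 1, HasDerivAt ζ (ζ' u) u)
    (hode : ∀ u ∈ Set.Ioo (0:ℝ) 1,
      -(1/2) * (u⁻¹ - u) * ζ' u - (4 * gam k + u ^ (-2:ℝ)) * ζ u
        = u ^ (-6:ℝ) * (1 - u^2) ^ (4 * gam k)) (C : ℝ) (hC : 0 < C)
    (hb : ∀ u ∈ Ioo (0:ℝ) 1, |ζ u| ≤ C * (1 - u^2) ^ (4 * gam k) / u^4) :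
    ∀ u ∈ Ioo (0:ℝ) 1, |ζ' u| ≤ (6*C+2) * (1 - u^2) ^ (4 * gam k) / (u^5 * (1-u^2)) ∧
      ∃ ζ2, HasDerivAt ζ' ζ2 u ∧
        |ζ2| ≤ (54*C+34) * (1 - u^2) ^ (4 * gam k) / (u^6 * (1-u^2)^2) := by
  obtain ⟨hg0, hg1, -, -⟩ := gam_facts k hk
  set g := gam k
  have hF : ∀ u ∈ Ioo (0:ℝ) 1, ζ' u =
      -((8*g*u+2/u)/(1-u^2)) * ζ u - 2 * ((1 - u^2) ^ (4 * g) / (u^5 * (1-u^2))) := by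
    intro u hu
    have hu0 := hu.1
    have hx : 0 < 1 - u^2 := by nlinarith [hu.1, hu.2]
    have h := hode u hu
    have q6 : u ^ (-6:ℝ) = 1 / u^6 := by
      rw [Real.rpow_neg hu0.le, one_div]; norm_cast
    have q2 : u ^ (-2:ℝ) = 1 / u^2 := by
      rw [Real.rpow_neg hu0.le, one_div]; norm_cast
    rw [q6, q2] at h
    have hm : (1 - u^2) * ζ' u = -2 * u * ((4 * g + 1/u^2) * ζ u + 1/u^6 * (1 - u^2) ^ (4 * g)) := by
      rw [← h]; field_simp; ring
    have : ζ' u = ((1 - u^2) * ζ' u) / (1 - u^2) := by field_simp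
    rw [this, hm]
    field_simp
    ring
  intro u hu
  have hu0 := hu.1
  have hu1 := hu.2
  have hx : 0 < 1 - u^2 := by nlinarith
  have hx1 : 1 - u^2 ≤ 1 := by nlinarith
  have hP : 0 < (1 - u^2) ^ (4 * g) := Real.rpow_pos_of_pos hx _
  have hbu := hb u hu
  have hXd : HasDerivAt (fun v : ℝ => 1 - v^2) (-2*u) u := by
    have := (hasDerivAt_pow 2 u).const_sub 1
    exact hda this (fun v => rfl) (by push_cast; ring)
  have hPd := hasDerivAt_xpow (4*g) u hu
  have hZd := hderiv u hu
  have hid := hasDerivAt_id u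
  have hnum : HasDerivAt (fun v : ℝ => 8*g*v+2/v) (8*g - 2/u^2) u := by
    have := (hid.const_mul (8*g)).add ((hasDerivAt_inv hu0.ne').const_mul 2)
    refine hda this (fun v => ?_) ?_
    · simp only [Pi.add_apply, id]; ring
    · ring
  have hden : HasDerivAt (fun v : ℝ => v^5 * (1-v^2)) (5*u^4*(1-u^2) + u^5*(-2*u)) u := by
    have := (hasDerivAt_pow 5 u).mul hXd
    exact hda this (fun v => rfl) (by push_cast; ring)
  have hFd := (((hnum.div hXd hx.ne').neg).mul hZd).sub
    ((hPd.div hden (by positivity)).const_mul 2)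
  have hz' : HasDerivAt ζ' _ u := hFd.congr_of_eventuallyEq (by
    filter_upwards [isOpen_Ioo.mem_nhds hu] with v hv
    rw [hF v hv]
    rfl)
  have hFu := hF u hu
  set x := 1 - u^2 with hxdef
  set P := x ^ (4 * g)
  have n1 : |8*g*u+2/u| ≤ 6 / u := by
    rw [abs_of_pos (by positivity), le_div_iff₀ hu0]
    have : (8*g*u+2/u)*u = 8*g*u^2+2 := by field_simp
    rw [this]; nlinarith
  have b1 : |ζ' u| ≤ (6*C+2) * P / (u^5 * x) := by
    rw [hFu]
    calc |-((8*g*u+2/u)/x) * ζ u - 2 * (P / (u^5 * x))|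
        ≤ |-((8*g*u+2/u)/x) * ζ u| + |2 * (P / (u^5 * x))| := abs_sub _ _
      _ = |8*g*u+2/u|/x * |ζ u| + 2 * (P / (u^5 * x)) := by
        rw [abs_mul, abs_neg, abs_div, abs_of_pos hx, abs_of_pos (show 0 < 2 * (P / (u^5 * x)) by positivity)]
      _ ≤ (6/u)/x * (C * P / u^4) + 2 * (P / (u^5 * x)) := by gcongr
      _ = _ := by field_simp
  refine ⟨b1, _, hz', ?_⟩
  have n2 : |8*g - 2/u^2| ≤ 6/u^2 := by
    have h1 : 1 ≤ 1/u^2 := by rw [le_div_iff₀ (by positivity)]; nlinarith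
    have h2 : 2/u^2 = 2*(1/u^2) := by ring
    have h6 : 6/u^2 = 6*(1/u^2) := by ring
    rw [abs_le, h2, h6]; constructor <;> nlinarith
  have n3 : |((8*g - 2/u^2) * x - (8*g*u+2/u)*(-2*u))/x^2| ≤ 18/(u^2*x^2) := by
    rw [abs_div, abs_of_pos (show 0 < x^2 by positivity)]
    have : |(8*g - 2/u^2) * x - (8*g*u+2/u)*(-2*u)| ≤ 18/u^2 := by
      calc _ ≤ |8*g - 2/u^2| * x + |8*g*u+2/u| * (2*u) := by
            refine (abs_sub _ _).trans (le_of_eq ?_)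
            rw [abs_mul, abs_mul, abs_of_pos hx, abs_mul, abs_neg, abs_of_pos hu0]
            norm_num
        _ ≤ 6/u^2 * 1 + 6/u*(2*u) := by gcongr
        _ = 6/u^2 + 12 := by field_simp; ring
        _ ≤ 6/u^2 + 12/u^2 := by
          gcongr
          rw [le_div_iff₀ (by positivity)]; nlinarith
        _ = _ := by ring
    calc _ ≤ 18/u^2/x^2 := by gcongr
      _ = _ := by field_simp
  have n4 : |(-2*u*(4*g)*P/x * (u^5*x) - P*(5*u^4*x + u^5*(-2*u)))/(u^5*x)^2| ≤ 11 * P/(u^6*x^2) := by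
    have e : (-2*u*(4*g)*P/x * (u^5*x) - P*(5*u^4*x + u^5*(-2*u)))/(u^5*x)^2
        = (P/(u^6*x^2)) * ((2-8*g)*u^2 - 5*x) := by field_simp; ring
    rw [e, abs_mul, abs_of_pos (by positivity)]
    have : |(2-8*g)*u^2 - 5*x| ≤ 11 := by
      rw [abs_le]; constructor <;> nlinarith
    calc _ ≤ P/(u^6*x^2) * 11 := by gcongr
      _ = _ := by ring
  have n5 : |-((8*g*u+2/u)/x)| ≤ 6/u/x := by
    rw [abs_neg, abs_div, abs_of_pos hx]; gcongr
  refine (abs_sub _ _).trans ?_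
  calc _ ≤ (18/(u^2*x^2)) * (C * P / u^4) + 6/u/x * ((6*C+2) * P / (u^5 * x))
        + 2 * (11 * P/(u^6*x^2)) := by
        refine add_le_add ((abs_add_le _ _).trans (add_le_add ?_ ?_)) ?_
        · rw [abs_mul, abs_neg]; gcongr
        · rw [abs_mul]
          exact mul_le_mul n5 b1 (abs_nonneg _) (by positivity)
        · rw [abs_mul, abs_two]; gcongr
    _ = _ := by field_simp; ring

lemma phi_derivs (g : ℝ) (hg0 : 0 < g) (hg1 : g < 1/2) : ∃ φ1 : ℝ → ℝ,
    ∀ u ∈ Ioo (0:ℝ) 1,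
    HasDerivAt (fun v : ℝ => v ^ (-2:ℝ) * (1 - v^2) ^ (1 + 2*g)) (φ1 u) u ∧
    -(2*g) * (u ^ (-2:ℝ) * (1 - u^2) ^ (1 + 2*g)) - (1/2)*(u⁻¹ - u) * φ1 u
      - u ^ (-2:ℝ) * (1 - u^2) ^ (1 + 2*g) / u^2 = 0 ∧
    u ^ (-2:ℝ) * (1 - u^2) ^ (1 + 2*g) = (1-u^2) * (1-u^2)^(2*g) / u^2 ∧
    |φ1 u| ≤ 6 * (1-u^2)^(2*g) / u^3 ∧
    ∃ φ2, HasDerivAt φ1 φ2 u ∧ |φ2| ≤ 26 * (1-u^2)^(2*g) / (u^4 * (1-u^2)) := by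
  refine ⟨fun u => (-2/u^3*(1-u^2) - 2*(1+2*g)/u) * (1-u^2)^(2*g), ?_⟩
  intro u hu
  have hu0 := hu.1
  have hu1 := hu.2
  have hx : 0 < 1 - u^2 := by nlinarith
  have hx1 : 1 - u^2 ≤ 1 := by nlinarith
  have hS : 0 < (1 - u^2) ^ (2 * g) := Real.rpow_pos_of_pos hx _
  have hform : ∀ v ∈ Ioo (0:ℝ) 1,
      v ^ (-2:ℝ) * (1 - v^2) ^ (1 + 2*g) = (1/v^2 - 1) * (1-v^2)^(2*g) := by
    intro v hv
    have hv0 := hv.1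
    have hx : 0 < 1 - v^2 := by nlinarith [hv.1, hv.2]
    have q2 : v ^ (-2:ℝ) = 1 / v^2 := by
      rw [Real.rpow_neg hv0.le, one_div]; norm_cast
    rw [q2, Real.rpow_add hx, Real.rpow_one]
    field_simp
  have hSd := hasDerivAt_xpow (2*g) u hu
  have hI1 : HasDerivAt (fun v : ℝ => 1/v) (-1/u^2) u := by
    have := hasDerivAt_inv hu0.ne'
    exact hda this (fun v => by simp) (by ring)
  have hI2 : HasDerivAt (fun v : ℝ => 1/v^2 - 1) (-2/u^3) u := by
    have := (hI1.pow 2).sub_const 1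
    refine hda this (fun v => ?_) ?_
    · simp
    · push_cast; field_simp
  have hA : HasDerivAt (fun v : ℝ => -2/v^3*(1-v^2) - 2*(1+2*g)/v)
      (6/u^4 - 2/u^2 + 2*(1+2*g)/u^2) u := by
    have h3 := (((hI1.pow 3).const_mul (-2)).add (hI1.const_mul 2)).sub (hI1.const_mul (2*(1+2*g)))
    have := h3.congr_of_eventuallyEq (f₁ := fun v : ℝ => -2/v^3*(1-v^2) - 2*(1+2*g)/v) (by
      filter_upwards [isOpen_Ioo.mem_nhds hu] with v hv
      have hv0 := hv.1
      simp only [Pi.add_apply, Pi.sub_apply, Pi.pow_apply]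
      field_simp
      ring)
    refine hda this (fun v => rfl) ?_
    push_cast
    field_simp
    ring
  have hφ := (hI2.mul hSd).congr_of_eventuallyEq
    (f₁ := fun v : ℝ => v ^ (-2:ℝ) * (1 - v^2) ^ (1 + 2*g)) (by
      filter_upwards [isOpen_Ioo.mem_nhds hu] with v hv
      rw [hform v hv]; rfl)
  have hfu := hform u hu
  set S := (1-u^2)^(2*g)
  refine ⟨?_, ?_, ?_, ?_, _, hA.mul hSd, ?_⟩
  · refine hda hφ (fun v => rfl) ?_
    have : (1/u^2 - 1) = (1-u^2)/u^2 := by field_simp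
    rw [this]
    field_simp
    ring
  · rw [hfu]; field_simp; ring
  · rw [hfu]; field_simp
  · have : (-2/u^3*(1-u^2) - 2*(1+2*g)/u) * S = -((2*(1-u^2) + 2*(1+2*g)*u^2) * S/u^3) := by
      field_simp; ring
    change |(-2/u^3*(1-u^2) - 2*(1+2*g)/u) * S| ≤ _
    rw [this, abs_neg, abs_of_pos (by positivity)]
    gcongr
    nlinarith
  · have : (6/u^4 - 2/u^2 + 2*(1+2*g)/u^2) * S + (-2/u^3*(1-u^2) - 2*(1+2*g)/u)*(-2*u*(2*g)*S/(1-u^2))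
      = S / (u^4 * (1-u^2)) * ((6 + 4*g*u^2)*(1-u^2) + 4*g*u^2*(2*(1-u^2)+2*(1+2*g)*u^2)) := by
      field_simp; ring
    rw [this, abs_of_pos (by positivity), mul_comm (26:ℝ), mul_div_right_comm]
    gcongr
    have hgu : 4*g*u^2 ≤ 2 := by nlinarith
    have hgu0 : 0 < 4*g*u^2 := by positivity
    have ha : (6 + 4*g*u^2)*(1-u^2) ≤ 8 * 1 := by gcongr; linarith
    have hb : 2*(1-u^2)+2*(1+2*g)*u^2 ≤ 6 := by nlinarith
    have hc : 4*g*u^2*(2*(1-u^2)+2*(1+2*g)*u^2) ≤ 2 * 6 := by gcongr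
    linarith

/-- Bound for the quadratic form with abstract values. -/
lemma Q_bound (N M x S u w w1 w2 : ℝ) (hN : 2 ≤ N) (hM : 0 < M) (hx : 0 < x) (hx1 : x ≤ 1)
    (hS : 0 < S) (hu : 0 < u)
    (h0 : |w| ≤ M * (x * S / u^2)) (h1 : |w1| ≤ M * (S / u^3)) (h2 : |w2| ≤ M * (S / (u^4 * x))) :
    |(w * w2 - (1/2) * w1^2 - w * w1 / u - N * w^2 / u^2) / N| ≤ 3 * M^2 * (S^2 / u^6) := by
  have hN0 : 0 < N := by linarith
  have t1 : |w * w2| ≤ M^2 * (S^2/u^6) := by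
    rw [abs_mul]
    calc _ ≤ (M * (x * S / u^2)) * (M * (S / (u^4 * x))) := by gcongr
      _ = _ := by field_simp
  have t2 : |(1/2) * w1^2| ≤ 1/2 * (M^2 * (S^2/u^6)) := by
    rw [abs_mul, abs_pow, abs_of_pos (show (0:ℝ) < 1/2 by norm_num)]
    calc _ ≤ 1/2 * (M * (S / u^3))^2 := by gcongr
      _ = _ := by field_simp
  have t3 : |w * w1 / u| ≤ M^2 * (S^2/u^6) := by
    rw [abs_div, abs_mul, abs_of_pos hu]
    calc _ ≤ (M * (1 * S / u^2)) * (M * (S / u^3)) / u := by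
          gcongr
          refine h0.trans ?_
          gcongr
      _ = _ := by field_simp
  have t4 : |N * w^2 / u^2| ≤ N * (M^2 * (S^2/u^6)) := by
    rw [abs_div, abs_mul, abs_pow, abs_of_pos hN0, abs_of_pos (show 0 < u^2 by positivity)]
    calc _ ≤ N * (M * (1 * S / u^2))^2 / u^2 := by
          gcongr
          refine h0.trans ?_
          gcongr
      _ = _ := by field_simp
  rw [abs_div, abs_of_pos hN0, div_le_iff₀ hN0]
  have e : 3 * M^2 * (S^2 / u^6) = 3 * (M^2 * (S^2/u^6)) := by ring
  rw [e]
  set Y := M^2 * (S^2/u^6)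
  have hY : 0 < Y := by positivity
  have := abs_sub (w * w2 - (1/2) * w1^2 - w * w1 / u) (N * w^2 / u^2)
  have := abs_sub (w * w2 - (1/2) * w1^2) (w * w1 / u)
  have := abs_sub (w * w2) ((1/2) * w1^2)
  nlinarith

lemma dop_est (n k : ℕ) (hn : 2 ≤ n) (hk : 3 ≤ k) (bk δ A C c : ℝ) (hc : 0 < c)
    (hck : ck n k bk = c) (hC : 0 < C) (hA : 0 < A)
    (hδ : δ ∈ Set.Ioo (0:ℝ) (1/2)) (ζ ζ' : ℝ → ℝ)
    (hAM : A = 3 * (c * (100 + 54 * C))^2)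
    (hderiv : ∀ u ∈ Set.Ioo (0:ℝ) 1, HasDerivAt ζ (ζ' u) u)
    (hode : ∀ u ∈ Set.Ioo (0:ℝ) 1,
      -(1/2) * (u⁻¹ - u) * ζ' u - (4 * gam k + u ^ (-2:ℝ)) * ζ u
        = u ^ (-6:ℝ) * (1 - u^2) ^ (4 * gam k))
    (hb : ∀ u ∈ Ioo (0:ℝ) 1, |ζ u| ≤ C * (1 - u^2) ^ (4 * gam k) / u^4)
    (s : ℝ) (hs : |s| = 1) (u τ : ℝ) (hu : u ∈ Ioo (0:ℝ) 1)
    (hreg : A * Real.exp (-2 * gam k * τ) * (1 - u^2) ^ (2 * gam k) ≤ c * (u^2 * (1 - u^2))) :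
    ∃ Y : ℝ, 0 ≤ Y ∧ |Dop n (zIntPM n k bk δ A ζ s) u τ - s * Y| ≤ Y := by
  obtain ⟨hg0, hg1, -, -⟩ := gam_facts k hk
  obtain ⟨φ1, hφ⟩ := phi_derivs (gam k) hg0 hg1
  have hzd := zeta_derivs k hk ζ ζ' hderiv hode C hC hb
  have hodeu := hode u hu
  have hbu := hb u hu
  have hu0 := hu.1
  have hu1 := hu.2
  have hx : 0 < 1 - u^2 := by nlinarith
  have hx1 : 1 - u^2 ≤ 1 := by nlinarith
  have q6 : u ^ (-6:ℝ) = 1 / u^6 := by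
    rw [Real.rpow_neg hu0.le, one_div]; norm_cast
  have q2 : u ^ (-2:ℝ) = 1 / u^2 := by
    rw [Real.rpow_neg hu0.le, one_div]; norm_cast
  set g := gam k with hg
  set E := Real.exp (-2 * g * τ) with hE
  have hE0 : 0 < E := Real.exp_pos _
  have hE2 : Real.exp (-4 * g * τ) = E^2 := by
    rw [hE, ← Real.exp_nat_mul]; congr 1; push_cast; ring
  have hP2 : (1 - u^2) ^ (4 * g) = ((1 - u^2) ^ (2 * g))^2 := by
    rw [← Real.rpow_mul_natCast hx.le]; congr 1; push_cast; ring
  set φ : ℝ → ℝ := fun v => v ^ (-2:ℝ) * (1 - v^2) ^ (1 + 2*g) with hφdef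
  obtain ⟨hφd, hφeq, hφval, hφ1b, φ2, hφ2d, hφ2b⟩ := hφ u hu
  obtain ⟨hz1b, ζ2, hζ2d, hz2b⟩ := hzd u hu
  set a := (1 + s * δ) * c with ha
  -- the barrier as a function of u
  have hzform : ∀ v t, zIntPM n k bk δ A ζ s v t =
      (a * φ v) * Real.exp (-2 * g * t) + (s * A * ζ v) * Real.exp (-4 * g * t) := by
    intro v t
    simp only [zIntPM, hck, hφdef, ha, hg]
    ring
  have hzu : (fun v => zIntPM n k bk δ A ζ s v τ) = fun v => E * (a * φ v + s * A * E * ζ v) := by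
    ext v
    rw [hzform, hE2]; ring
  have hd1 : ∀ v ∈ Ioo (0:ℝ) 1, HasDerivAt (fun v => zIntPM n k bk δ A ζ s v τ)
      (E * (a * φ1 v + s * A * E * ζ' v)) v := by
    intro v hv
    rw [hzu]
    exact (((hφ v hv).1.const_mul a).add ((hderiv v hv).const_mul (s * A * E))).const_mul E
  have hdd1 : deriv (fun v => zIntPM n k bk δ A ζ s v τ) u =
      E * (a * φ1 u + s * A * E * ζ' u) := (hd1 u hu).deriv
  have hdd2 : deriv (deriv (fun v => zIntPM n k bk δ A ζ s v τ)) u =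
      E * (a * φ2 + s * A * E * ζ2) := by
    have h2 : HasDerivAt (fun v => E * (a * φ1 v + s * A * E * ζ' v))
      (E * (a * φ2 + s * A * E * ζ2)) u :=
      ((hφ2d.const_mul a).add (hζ2d.const_mul (s * A * E))).const_mul E
    refine (h2.congr_of_eventuallyEq ?_).deriv
    filter_upwards [isOpen_Ioo.mem_nhds hu] with v hv
    exact (hd1 v hv).deriv
  have hdt : deriv (zIntPM n k bk δ A ζ s u) τ =
      a * φ u * (-2 * g * E) + s * A * ζ u * (-4 * g * E^2) := by
    have e1 : ∀ m : ℝ, HasDerivAt (fun t => Real.exp (m * t)) (Real.exp (m * τ) * (m * 1)) τ :=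
      fun m => ((hasDerivAt_id τ).const_mul m).exp
    have h := ((e1 (-2 * g)).const_mul (a * φ u)).add ((e1 (-4 * g)).const_mul (s * A * ζ u))
    have h' : HasDerivAt (zIntPM n k bk δ A ζ s u) _ τ := hda h (fun t => hzform u t) rfl
    rw [h'.deriv, hE2]
    ring
  set x := 1 - u^2 with hxd
  set S := x ^ (2 * g)
  have hS : 0 < S := Real.rpow_pos_of_pos hx _
  set w := a * φ u + s * A * E * ζ u with hw
  set w1 := a * φ1 u + s * A * E * ζ' u with hw1
  set w2 := a * φ2 + s * A * E * ζ2 with hw2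
  have hn2 : (2:ℝ) ≤ n := by exact_mod_cast hn
  refine ⟨A * E^2 * (S^2 / u^6), by positivity, ?_⟩
  have hD : Dop n (zIntPM n k bk δ A ζ s) u τ - s * (A * E^2 * (S^2 / u^6)) =
      - (E^2 * ((w * w2 - (1/2) * w1^2 - w * w1 / u
        - (2 * ((n:ℝ) - 1)) * w^2 / u^2) / (2 * ((n:ℝ) - 1)))) := by
    have hval : zIntPM n k bk δ A ζ s u τ = E * w := congrFun hzu u
    simp only [Dop, Qop, hdd1, hdd2, hdt, hval]
    rw [q6, q2, hP2] at hodeu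
    have hφeq' : -(2*g) * φ u - (1/2)*(u⁻¹ - u) * φ1 u - φ u / u^2 = 0 := hφeq
    have lin : a * φ u * (-2 * g * E) + s * A * ζ u * (-4 * g * E^2)
        - (1/2) * (u⁻¹ - u) * (E * w1) - E * w / u^2 = s * (A * E^2 * (S^2 / u^6)) := by
      rw [hw, hw1]
      linear_combination (a * E) * hφeq' + s * A * E^2 * hodeu
    rw [lin]
    ring
  rw [hD, abs_neg, abs_mul, abs_of_pos (show 0 < E^2 by positivity)]
  have hM : 0 < c * (100 + 54 * C) := by positivity
  have haB : |a| ≤ 3/2 * c := by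
    rw [ha, abs_mul, abs_of_pos hc]
    gcongr
    refine (abs_add_le _ _).trans ?_
    rw [abs_mul, hs, abs_of_pos hδ.1, abs_one]
    linarith [hδ.2]
  have hsA : |s * A * E| = A * E := by
    rw [abs_mul, abs_mul, hs, abs_of_pos hA, abs_of_pos hE0]; ring
  have hAES : A * E * S^2 ≤ c * (u^2 * x) * S := by
    calc A * E * S^2 = (A * E * S) * S := by ring
      _ ≤ _ := by gcongr
  have combine : ∀ f h Bf Bh m : ℝ, 0 < m → 0 ≤ Bf → 0 ≤ Bh → |f| ≤ Bf * m →
      A * E * |h| ≤ c * (Bh * m) → 3/2 * Bf + Bh ≤ 100 + 54 * C →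
      |a * f + s * A * E * h| ≤ c * (100 + 54 * C) * m := by
    intro f h Bf Bh m hm hBf hBh hf hh hB
    calc |a * f + s * A * E * h| ≤ |a| * |f| + A * E * |h| := by
          refine (abs_add_le _ _).trans ?_
          rw [abs_mul a, abs_mul (s * A * E), hsA]
      _ ≤ (3/2 * c) * (Bf * m) + c * (Bh * m) := by gcongr
      _ = c * (3/2 * Bf + Bh) * m := by ring
      _ ≤ _ := by gcongr
  rw [hP2] at hbu hz1b hz2b
  have hw0b : |w| ≤ c * (100 + 54 * C) * (x * S / u^2) := by
    refine combine _ _ 1 C _ (by positivity) (by positivity) (by positivity) ?_ ?_ (by linarith)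
    · have : φ u = x * S / u^2 := hφval
      rw [this, abs_of_pos (by positivity), one_mul]
    · calc A * E * |ζ u| ≤ A * E * (C * S^2 / u^4) := by gcongr
        _ = C / u^4 * (A * E * S^2) := by ring
        _ ≤ C / u^4 * (c * (u^2 * x) * S) := by gcongr
        _ = _ := by field_simp
  have hw1b : |w1| ≤ c * (100 + 54 * C) * (S / u^3) := by
    refine combine _ _ 6 (6*C+2) _ (by positivity) (by positivity) (by positivity) ?_ ?_ (by linarith)
    · rw [← mul_div_assoc]; exact hφ1b
    · calc A * E * |ζ' u| ≤ A * E * ((6*C+2) * S^2 / (u^5*x)) := by gcongr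
        _ = (6*C+2) / (u^5*x) * (A * E * S^2) := by ring
        _ ≤ (6*C+2) / (u^5*x) * (c * (u^2 * x) * S) := by gcongr
        _ = _ := by field_simp
  have hw2b : |w2| ≤ c * (100 + 54 * C) * (S / (u^4 * x)) := by
    refine combine _ _ 26 (54*C+34) _ (by positivity) (by positivity) (by positivity) ?_ ?_ (by linarith)
    · rw [← mul_div_assoc]; exact hφ2b
    · calc A * E * |ζ2| ≤ A * E * ((54*C+34) * S^2 / (u^6*x^2)) := by gcongr
        _ = (54*C+34) / (u^6*x^2) * (A * E * S^2) := by ring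
        _ ≤ (54*C+34) / (u^6*x^2) * (c * (u^2 * x) * S) := by gcongr
        _ = _ := by field_simp
  have := Q_bound (2 * ((n:ℝ) - 1)) (c * (100 + 54 * C)) x S u w w1 w2 (by linarith) hM hx hx1 hS hu0
    hw0b hw1b hw2b
  calc _ ≤ E^2 * (3 * (c * (100 + 54 * C))^2 * (S^2 / u^6)) := by gcongr
    _ = _ := by rw [hAM]; ring

/-- properly ordered barriers in the intermediate region. -/
theorem stmt3 (n k : ℕ) (hn : 2 ≤ n) (hk : 3 ≤ k) (bk : ℝ) (hbk : bk < 0)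
    (δ : ℝ) (hδ : δ ∈ Set.Ioo (0:ℝ) (1/2)) (ζ ζ' : ℝ → ℝ)
    (hderiv : ∀ u ∈ Set.Ioo (0:ℝ) 1, HasDerivAt ζ (ζ' u) u)
    (hode : ∀ u ∈ Set.Ioo (0:ℝ) 1,
      -(1/2) * (u⁻¹ - u) * ζ' u - (4 * gam k + u ^ (-2:ℝ)) * ζ u
        = u ^ (-6:ℝ) * (1 - u^2) ^ (4 * gam k))
    (hz0 : (fun u => ζ u - u ^ (-4:ℝ)) =O[𝓝[>] (0:ℝ)]
        fun u => u ^ (-2:ℝ) * Real.log (1/u))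
    (hz1 : (fun u => ζ u + (1 - u^2) ^ (4 * gam k)) =O[𝓝[<] (1:ℝ)]
        fun u => (1 - u^2) ^ (4 * gam k + 1) * |Real.log (1 - u^2)|) :
    ∃ A₃ B₂ B₃ τ₃ : ℝ, 0 < A₃ ∧ 0 < B₂ ∧ B₂ ≤ B₃ ∧
      ∀ u τ : ℝ, τ₃ ≤ τ →
        B₂ * Real.sqrt (2 * A₃ / ck n k bk) * Real.exp (-gam k * τ) ≤ u →
        u ≤ 1 - B₃ * (2 * A₃ / ck n k bk) ^ ((k:ℝ)/2) * Real.exp (-mu k * τ) →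
        0 ≤ Dop n (zIntPM n k bk δ A₃ ζ 1) u τ ∧
        Dop n (zIntPM n k bk δ A₃ ζ (-1)) u τ ≤ 0 ∧
        zIntPM n k bk δ A₃ ζ (-1) u τ < zIntPM n k bk δ A₃ ζ 1 u τ := by
  have hck0 : 0 < ck n k bk := by
    have hn2 : (2:ℝ) ≤ n := by exact_mod_cast hn
    have h3 : (3:ℝ) ≤ k := by exact_mod_cast hk
    have hb : 0 < -bk := by linarith
    have hn1 : 0 < (n:ℝ) - 1 := by linarith
    have : 0 < (-bk) ^ ((2:ℝ)/(k:ℝ)) := Real.rpow_pos_of_pos hb _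
    unfold ck
    positivity
  obtain ⟨C, hC, hb⟩ := zeta_bound k hk ζ ζ' hderiv hz0 hz1
  have hδ0 := hδ.1
  obtain ⟨hg0, hg1, -, -⟩ := gam_facts k hk
  set c := ck n k bk with hc
  set A := 3 * (c * (100 + 54 * C))^2 with hAM
  have hA : 0 < A := by positivity
  set K := 1 + C / δ with hKd
  have hCd : 0 < C / δ := by positivity
  have hK : 1 ≤ K := by linarith
  have hK0 : 0 < K := by linarith
  refine ⟨A, K ^ ((k:ℝ)/2), K ^ ((k:ℝ)/2), 0, hA, by positivity, le_refl _, ?_⟩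
  intro u τ _ h1 h2
  obtain ⟨hu, hreg⟩ := region_bound k hk A c K u τ hA hck0 hK h1 h2
  have hu0 := hu.1
  have hu1 := hu.2
  have hx : 0 < 1 - u^2 := by nlinarith
  have hS : 0 < (1 - u^2) ^ (2 * gam k) := Real.rpow_pos_of_pos hx _
  have hE0 : 0 < Real.exp (-2 * gam k * τ) := Real.exp_pos _
  have hreg' : A * Real.exp (-2 * gam k * τ) * (1 - u^2) ^ (2 * gam k) ≤ c * (u^2 * (1 - u^2)) := by
    have : 0 < A * Real.exp (-2 * gam k * τ) * (1 - u^2) ^ (2 * gam k) := by positivity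
    nlinarith
  refine ⟨?_, ?_, ?_⟩
  · obtain ⟨Y, hY, h⟩ := dop_est n k hn hk bk δ A C c hck0 hc.symm hC hA hδ ζ ζ' hAM hderiv hode hb 1
      (by simp) u τ hu hreg'
    have := (abs_le.1 h).1
    linarith
  · obtain ⟨Y, hY, h⟩ := dop_est n k hn hk bk δ A C c hck0 hc.symm hC hA hδ ζ ζ' hAM hderiv hode hb (-1)
      (by simp) u τ hu hreg'
    have := (abs_le.1 h).2
    linarith
  · have hbu := hb u hu
    have hE2 : Real.exp (-4 * gam k * τ) = (Real.exp (-2 * gam k * τ))^2 := by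
      rw [← Real.exp_nat_mul]; congr 1; push_cast; ring
    have hP2 : (1 - u^2) ^ (4 * gam k) = ((1 - u^2) ^ (2 * gam k))^2 := by
      rw [← Real.rpow_mul_natCast hx.le]; congr 1; push_cast; ring
    have q2 : u ^ (-2:ℝ) = 1 / u^2 := by
      rw [Real.rpow_neg hu0.le, one_div]; norm_cast
    simp only [zIntPM, ← hc]
    rw [hE2, q2, Real.rpow_add hx, Real.rpow_one]
    rw [hP2] at hbu
    set E := Real.exp (-2 * gam k * τ)
    set x := 1 - u^2
    set S := x ^ (2 * gam k)
    have h3 : A * E * |ζ u| < δ * c * (x * S / u^2) := by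
      have hlt : C / K < δ := by
        rw [div_lt_iff₀ hK0, hKd]
        have : δ * (1 + C / δ) = δ + C := by field_simp
        linarith
      calc A * E * |ζ u| ≤ A * E * (C * S^2 / u^4) := by gcongr
        _ = C / K / u^4 * S * (K * (A * E * S)) := by field_simp
        _ ≤ C / K / u^4 * S * (c * (u^2 * x)) := by gcongr
        _ = C / K * (c * (x * S / u^2)) := by field_simp
        _ < δ * (c * (x * S / u^2)) := by gcongr
        _ = _ := by ring
    have h4 : 0 < δ * c * (x * S / u^2) + A * E * ζ u := by
      have h5 : -|ζ u| ≤ ζ u := neg_abs_le _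
      have h6 : 0 < A * E := by positivity
      nlinarith
    have h7 : 0 < 2 * E * (δ * c * (x * S / u^2) + A * E * ζ u) := by positivity
    rw [← sub_pos]
    refine lt_of_lt_of_eq h7 ?_
    ring
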